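/- For binary fields F_{2^m}, the number of nonzero elements x with tr(x) = tr(x^{-1}) = 1 equals T_{11} = (2^m + 1)/4 + (1/2^{m+1}) · Σ_{r=0}^{⌊m/2⌋} (-1)^{m+r+1} · C(m, 2r) · 7^r. -/

import Mathlib

/-!
Let `ψ` be a nontrivial additive character of a finite field `k` with `q` elements, and `a ≠ 0`.
Give a monic polynomial `f` with roots `xᵢ ≠ 0` the weight `χ(f) = ψ (∑ (xᵢ + a / xᵢ))`, which
depends only on the two leading and the two trailing coefficients of `f`. The sum of `χ` over the
monic polynomials of degree `d` is therefore the Kloosterman sum `K` for `d = 1`, equals `q` for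
`d = 2` and vanishes for `d ≥ 3`, so `χ` has `L`-series `1 + K T + q T² = (1 - α T) (1 - β T)`.
Comparing its logarithmic derivative with that of the Euler product, where an irreducible
polynomial of degree dividing `n` collects its roots in the extension of degree `n`, the
Kloosterman sum over that extension is `-(αⁿ + βⁿ)`.

For `k = 𝔽₂` one has `K = 1`, hence `α, β = (-1 ± √-7) / 2`, and the binomial theorem evaluates
`αᵐ + βᵐ`. The number `T₁₁` is related to the Kloosterman sum by expanding
`∑ (1 - ψ (tr x)) (1 - ψ (tr x⁻¹))`, whose summand is `4` if `tr x = tr x⁻¹ = 1` and `0` otherwise.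
-/

open Polynomial

section MonicPolynomials

variable {A : Type*} [CommRing A] [Nontrivial A]

variable (A) in
theorem finite_setOf_isMonicOfDegree [Finite A] (d : ℕ) :
    {f : A[X] | f.IsMonicOfDegree d}.Finite := by
  have h : {f : A[X] | f.IsMonicOfDegree d} = {f : A[X] | f.Monic ∧ f.natDegree = d} :=
    Set.ext fun f => (isMonicOfDegree_iff' f d).trans and_comm
  rw [h]
  exact Finite.of_equiv (Fin d → A)
    ((monicEquivDegreeLT d).trans (degreeLTEquiv A d).toEquiv).symm

variable (A) in
/-- The monic polynomials of degree `d` over a finite ring. -/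
noncomputable def monicsOfDegree [Finite A] (d : ℕ) : Finset A[X] :=
  (finite_setOf_isMonicOfDegree A d).toFinset

theorem mem_monicsOfDegree [Finite A] {d : ℕ} {f : A[X]} :
    f ∈ monicsOfDegree A d ↔ f.IsMonicOfDegree d := by
  simp [monicsOfDegree]

theorem monicsOfDegree_zero [Finite A] : monicsOfDegree A 0 = {1} := by
  ext f
  simp [mem_monicsOfDegree]

theorem sum_monicsOfDegree_one [Fintype A] {M : Type*} [AddCommMonoid M] (F : A[X] → M) :
    ∑ f ∈ monicsOfDegree A 1, F f = ∑ x : A, F (X - C x) := by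
  refine (Finset.sum_bij (fun x _ => X - C x) (fun x _ => ?_) (fun x _ y _ h => ?_)
    (fun f hf => ?_) fun _ _ => rfl).symm
  · exact mem_monicsOfDegree.mpr (isMonicOfDegree_X_sub_one x)
  · simpa using h
  · obtain ⟨r, rfl⟩ := isMonicOfDegree_one_iff.mp (mem_monicsOfDegree.mp hf)
    exact ⟨-r, Finset.mem_univ _, by simp⟩

theorem sum_monicsOfDegree_two [Fintype A] {M : Type*} [AddCommMonoid M] (F : A[X] → M) :
    ∑ f ∈ monicsOfDegree A 2, F f = ∑ b : A, ∑ c : A, F (X ^ 2 + C c * X + C b) := by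
  rw [← Fintype.sum_prod_type' fun b c : A => F (X ^ 2 + C c * X + C b)]
  refine (Finset.sum_bij (fun p _ => X ^ 2 + C p.2 * X + C p.1) (fun p _ => ?_)
    (fun p _ p' _ h => ?_) (fun f hf => ?_) fun _ _ => rfl).symm
  · exact mem_monicsOfDegree.mpr (isMonicOfDegree_add_add_two p.2 p.1)
  · exact Prod.ext (by simpa using congrArg (coeff · 0) h)
      (by simpa [coeff_X, coeff_C] using congrArg (coeff · 1) h)
  · obtain ⟨c, b, rfl⟩ := isMonicOfDegree_two_iff.mp (mem_monicsOfDegree.mp hf)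
    exact ⟨(b, c), Finset.mem_univ _, rfl⟩

open Classical in
theorem sum_monicsOfDegree_filter_dvd [Finite A] {M : Type*} [AddCommMonoid M] (F : A[X] → M)
    {g : A[X]} {n : ℕ} (hg : g.IsMonicOfDegree n) (j : ℕ) :
    ∑ f ∈ monicsOfDegree A (n + j) with g ∣ f, F f = ∑ h ∈ monicsOfDegree A j, F (g * h) := by
  refine (Finset.sum_bij (fun h _ => g * h) (fun h hh => ?_)
    (fun _ _ _ _ h => hg.monic.isRegular.left h) (fun f hf => ?_) fun _ _ => rfl).symm
  · exact Finset.mem_filter.mpr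
      ⟨mem_monicsOfDegree.mpr (hg.mul (mem_monicsOfDegree.mp hh)), dvd_mul_right g h⟩
  · obtain ⟨hf, h, rfl⟩ := Finset.mem_filter.mp hf
    exact ⟨h, mem_monicsOfDegree.mpr (hg.of_mul_left (mem_monicsOfDegree.mp hf)), rfl⟩

end MonicPolynomials

section Factorization

variable {k : Type*} [Field k]

variable (k) in
open Classical in
/-- The monic irreducible polynomials over a finite field whose degree divides `n`, for `n ≠ 0`;
for `n = 0` this is the empty set. -/
noncomputable def monicIrreduciblesOfDegreeDvd [Finite k] (n : ℕ) : Finset k[X] :=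
  {P ∈ n.divisors.biUnion (monicsOfDegree k) | Irreducible P}

theorem mem_monicIrreduciblesOfDegreeDvd [Finite k] {n : ℕ} {P : k[X]} :
    P ∈ monicIrreduciblesOfDegreeDvd k n ↔
      P.Monic ∧ Irreducible P ∧ P.natDegree ∣ n ∧ n ≠ 0 := by
  simp only [monicIrreduciblesOfDegreeDvd, Finset.mem_filter, Finset.mem_biUnion,
    Nat.mem_divisors, mem_monicsOfDegree, isMonicOfDegree_iff']
  grind

open UniqueFactorizationMonoid

theorem natDegree_eq_sum_count_normalizedFactors [DecidableEq k] {f : k[X]} (hf : f ≠ 0) :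
    f.natDegree =
      ∑ P ∈ (normalizedFactors f).toFinset, (normalizedFactors f).count P * P.natDegree := by
  conv_lhs => rw [← leadingCoeff_mul_prod_normalizedFactors f,
    natDegree_C_mul (leadingCoeff_ne_zero.mpr hf),
    natDegree_multiset_prod _ (zero_notMem_normalizedFactors f),
    Finset.sum_multiset_map_count]
  simp only [smul_eq_mul]

theorem pow_dvd_iff_le_count_normalizedFactors [DecidableEq k] {f P : k[X]} (hf : f ≠ 0)
    (hP : Irreducible P) (hm : P.Monic) (i : ℕ) :
    P ^ i ∣ f ↔ i ≤ (normalizedFactors f).count P := by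
  rw [pow_dvd_iff_le_emultiplicity, emultiplicity_eq_count_normalizedFactors hP hf,
    hm.normalize_eq_self, Nat.cast_le]

theorem mem_monicIrreduciblesOfDegreeDvd_and_pow_dvd_iff [Finite k] [DecidableEq k] {f P : k[X]}
    (hf : f ≠ 0) {n : ℕ} :
    P ∈ monicIrreduciblesOfDegreeDvd k n ∧ P ^ (n / P.natDegree) ∣ f ↔
      P ∈ normalizedFactors f ∧
        ∃ i ∈ Finset.Icc 1 ((normalizedFactors f).count P), i * P.natDegree = n := by
  rw [mem_monicIrreduciblesOfDegreeDvd, Polynomial.mem_normalizedFactors_iff hf]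
  constructor
  · rintro ⟨⟨hm, hP, ⟨i, rfl⟩, hn⟩, hdvd⟩
    have hi : i ≠ 0 := right_ne_zero_of_mul hn
    rw [Nat.mul_div_cancel_left _ hP.natDegree_pos] at hdvd
    exact ⟨⟨hP, hm, (dvd_pow_self P hi).trans hdvd⟩, i, Finset.mem_Icc.mpr
      ⟨Nat.one_le_iff_ne_zero.mpr hi, (pow_dvd_iff_le_count_normalizedFactors hf hP hm i).mp hdvd⟩,
      mul_comm _ _⟩
  · rintro ⟨⟨hP, hm, -⟩, i, hi, rfl⟩
    obtain ⟨hi, hcount⟩ := Finset.mem_Icc.mp hi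
    rw [Nat.mul_div_cancel _ hP.natDegree_pos]
    exact ⟨⟨hm, hP, dvd_mul_left _ _, mul_ne_zero (by omega) hP.natDegree_pos.ne'⟩,
      (pow_dvd_iff_le_count_normalizedFactors hf hP hm i).mpr hcount⟩

open Classical in
theorem sum_natDegree_filter_pow_dvd [Finite k] {f : k[X]} (hf : f ≠ 0) :
    ∑ n ∈ Finset.range (f.natDegree + 1),
      ∑ P ∈ monicIrreduciblesOfDegreeDvd k n with P ^ (n / P.natDegree) ∣ f, P.natDegree =
      f.natDegree := by
  conv_rhs => rw [natDegree_eq_sum_count_normalizedFactors hf]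
  rw [Finset.sum_comm' (t' := (normalizedFactors f).toFinset) (s' := fun P =>
    (Finset.Icc 1 ((normalizedFactors f).count P)).image (· * P.natDegree))]
  · refine Finset.sum_congr rfl fun P hP => ?_
    have hpos : 0 < P.natDegree :=
      (irreducible_of_normalized_factor P (Multiset.mem_toFinset.mp hP)).natDegree_pos
    rw [Finset.sum_const, Finset.card_image_of_injective _ (mul_left_injective₀ hpos.ne'),
      Nat.card_Icc, Nat.add_sub_cancel, smul_eq_mul]
  · intro n P
    rw [Finset.mem_filter, mem_monicIrreduciblesOfDegreeDvd_and_pow_dvd_iff hf, Finset.mem_image,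
      Multiset.mem_toFinset, and_comm (b := P ∈ _), and_iff_right_of_imp, and_comm]
    rintro ⟨hP, i, hi, rfl⟩
    obtain ⟨hirr, hm, -⟩ := (Polynomial.mem_normalizedFactors_iff hf).mp hP
    have hdvd := (pow_dvd_iff_le_count_normalizedFactors hf hirr hm i).mpr (Finset.mem_Icc.mp hi).2
    rw [Finset.mem_range_succ_iff, ← natDegree_pow]
    exact natDegree_le_of_dvd hdvd hf

end Factorization

section LSeries

variable {k : Type*} [Field k] [Finite k] {R : Type*} [CommRing R]

/-- The `L`-series `∑ χ(f) T ^ deg f`, over monic `f`, of a completely multiplicative function `χ`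
on polynomials over a finite field. -/
noncomputable def lSeries (χ : k[X] →* R) : PowerSeries R :=
  .mk fun d => ∑ f ∈ monicsOfDegree k d, χ f

theorem coeff_zero_lSeries (χ : k[X] →* R) : (lSeries χ).coeff 0 = 1 := by
  rw [lSeries, PowerSeries.coeff_mk, monicsOfDegree_zero, Finset.sum_singleton, map_one]

/-- The series `∑ deg P · χ(P) ^ i · T ^ (i deg P)`, over monic irreducible `P` and `i ≥ 1`, which
is `T` times the logarithmic derivative of the Euler product of `χ`. -/
noncomputable def primePowerSeries (χ : k[X] →* R) : PowerSeries R :=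
  .mk fun n => ∑ P ∈ monicIrreduciblesOfDegreeDvd k n, (P.natDegree : R) * χ P ^ (n / P.natDegree)

open Classical in
theorem coeff_primePowerSeries_mul_coeff_lSeries (χ : k[X] →* R) (n j : ℕ) :
    (primePowerSeries χ).coeff n * (lSeries χ).coeff j = ∑ f ∈ monicsOfDegree k (n + j),
      χ f * ↑(∑ P ∈ monicIrreduciblesOfDegreeDvd k n with P ^ (n / P.natDegree) ∣ f,
        P.natDegree) := by
  have hprime : ∀ P ∈ monicIrreduciblesOfDegreeDvd k n,
      χ P ^ (n / P.natDegree) * ∑ h ∈ monicsOfDegree k j, χ h =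
        ∑ f ∈ monicsOfDegree k (n + j), if P ^ (n / P.natDegree) ∣ f then χ f else 0 := by
    intro P hP
    obtain ⟨hm, -, hdvd, -⟩ := mem_monicIrreduciblesOfDegreeDvd.mp hP
    have hpow : (P ^ (n / P.natDegree)).IsMonicOfDegree n :=
      ⟨by rw [natDegree_pow, Nat.div_mul_cancel hdvd], hm.pow _⟩
    simp only [← Finset.sum_filter, sum_monicsOfDegree_filter_dvd χ hpow, map_mul, map_pow,
      Finset.mul_sum]
  simp only [primePowerSeries, lSeries, PowerSeries.coeff_mk, Finset.sum_mul, mul_assoc]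
  rw [Finset.sum_congr rfl fun P hP => by rw [hprime P hP, Finset.mul_sum], Finset.sum_comm]
  refine Finset.sum_congr rfl fun f _ => ?_
  rw [Nat.cast_sum, Finset.sum_filter, Finset.mul_sum]
  exact Finset.sum_congr rfl fun P _ => by split_ifs <;> ring

theorem X_mul_derivative_lSeries (χ : k[X] →* R) :
    PowerSeries.X * PowerSeries.derivative R (lSeries χ) = primePowerSeries χ * lSeries χ := by
  classical
  ext d
  have hleft : (PowerSeries.X * PowerSeries.derivative R (lSeries χ)).coeff d =
      d * (lSeries χ).coeff d := by
    cases d with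
    | zero => simp
    | succ d =>
      rw [PowerSeries.coeff_succ_X_mul, PowerSeries.coeff_derivative, mul_comm, Nat.cast_succ]
  have hright : ∀ n ∈ Finset.range (d + 1),
      (primePowerSeries χ).coeff n * (lSeries χ).coeff (d - n) = ∑ f ∈ monicsOfDegree k d,
        χ f * ↑(∑ P ∈ monicIrreduciblesOfDegreeDvd k n with P ^ (n / P.natDegree) ∣ f,
          P.natDegree) := fun n hn => by
    rw [coeff_primePowerSeries_mul_coeff_lSeries,
      Nat.add_sub_cancel' (Finset.mem_range_succ_iff.mp hn)]
  rw [hleft, PowerSeries.coeff_mul, Finset.Nat.sum_antidiagonal_eq_sum_range_succ_mk,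
    Finset.sum_congr rfl hright, Finset.sum_comm, lSeries, PowerSeries.coeff_mk, Finset.mul_sum]
  refine Finset.sum_congr rfl fun f hf => ?_
  obtain ⟨rfl, hm⟩ := mem_monicsOfDegree.mp hf
  rw [← Finset.mul_sum, ← Nat.cast_sum, sum_natDegree_filter_pow_dvd hm.ne_zero, mul_comm]

theorem mk_pow_mul_one_sub_C_mul_X (α : R) :
    (PowerSeries.mk fun n => α ^ n) * (1 - PowerSeries.C α * PowerSeries.X) = 1 := by
  ext n
  rw [mul_sub, mul_one, mul_left_comm, map_sub, PowerSeries.coeff_C_mul]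
  cases n with
  | zero => simp
  | succ n =>
    rw [PowerSeries.coeff_succ_mul_X, PowerSeries.coeff_mk, PowerSeries.coeff_mk, pow_succ',
      sub_self, PowerSeries.coeff_one, if_neg n.succ_ne_zero]

theorem coeff_primePowerSeries_of_lSeries_eq {χ : k[X] →* R} {α β : R}
    (hL : lSeries χ =
      (1 - PowerSeries.C α * PowerSeries.X) * (1 - PowerSeries.C β * PowerSeries.X))
    {n : ℕ} (hn : n ≠ 0) : (primePowerSeries χ).coeff n = -(α ^ n + β ^ n) := by
  have hderiv : PowerSeries.derivative R (lSeries χ) =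
      -PowerSeries.C α * (1 - PowerSeries.C β * PowerSeries.X)
        - PowerSeries.C β * (1 - PowerSeries.C α * PowerSeries.X) := by
    rw [hL, Derivation.leibniz]
    simp only [map_sub, Derivation.leibniz, PowerSeries.derivative_C, PowerSeries.derivative_X,
      Derivation.map_one_eq_zero, smul_eq_mul]
    ring
  have hlog := X_mul_derivative_lSeries χ
  rw [hderiv, hL] at hlog
  have hα := mk_pow_mul_one_sub_C_mul_X α
  have hβ := mk_pow_mul_one_sub_C_mul_X β
  set G := PowerSeries.mk fun n => α ^ n with hG
  set H := PowerSeries.mk fun n => β ^ n with hH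
  have hseries : primePowerSeries χ = -(PowerSeries.C α * (PowerSeries.X * G) +
      PowerSeries.C β * (PowerSeries.X * H)) := by
    linear_combination -(G * H) * hlog
      - (primePowerSeries χ + PowerSeries.C β * PowerSeries.X * H) * hα
      - (primePowerSeries χ * G * (1 - PowerSeries.C α * PowerSeries.X) +
          PowerSeries.C α * PowerSeries.X * G) * hβ
  obtain ⟨m, rfl⟩ := Nat.exists_eq_succ_of_ne_zero hn
  rw [hseries, map_neg, map_add, PowerSeries.coeff_C_mul, PowerSeries.coeff_C_mul,
    PowerSeries.coeff_succ_X_mul, PowerSeries.coeff_succ_X_mul, hG, hH, PowerSeries.coeff_mk,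
    PowerSeries.coeff_mk, pow_succ', pow_succ']

end LSeries

theorem nextCoeff_mul_of_noZeroDivisors {A : Type*} [Semiring A] [NoZeroDivisors A] (f g : A[X]) :
    (f * g).nextCoeff = f.leadingCoeff * g.nextCoeff + f.nextCoeff * g.leadingCoeff := by
  simp only [← coeff_one_reverse, reverse_mul_of_domain, mul_coeff_one, coeff_zero_reverse]

section Kloosterman

variable {k : Type*} [Field k] {R : Type*} [CommRing R]

/-- The Kloosterman sum `∑ ψ(x + a / x)` over the nonzero elements `x` of a finite field. -/
def kloostermanSum [Fintype k] [DecidableEq k] (ψ : AddChar k R) (a : k) : R :=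
  ∑ x with x ≠ 0, ψ (x + a * x⁻¹)

theorem one_add_kloostermanSum [Fintype k] [DecidableEq k] (ψ : AddChar k R) (a : k) :
    1 + kloostermanSum ψ a = ∑ x, ψ (x + a * x⁻¹) := by
  rw [kloostermanSum, ← Finset.sum_filter_add_sum_filter_not Finset.univ (· = (0 : k)),
    Finset.filter_eq' Finset.univ (0 : k), if_pos (Finset.mem_univ 0), Finset.sum_singleton,
    inv_zero, mul_zero, add_zero, AddChar.map_zero_eq_one]

open Classical in
/-- The completely multiplicative function on polynomials with value `ψ (∑ (xᵢ + a / xᵢ))`, summed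
over the roots `xᵢ`, if all roots are nonzero, and `0` otherwise. The sums of the roots and of their
inverses are read off the coefficients, so that the roots need not lie in `k`. -/
noncomputable def kloostermanHom (ψ : AddChar k R) (a : k) : k[X] →* R where
  toFun f := if f.coeff 0 = 0 then 0 else
    ψ (-(f.nextCoeff / f.leadingCoeff) + a * -(f.coeff 1 / f.coeff 0))
  map_one' := by simp [nextCoeff, coeff_one]
  map_mul' f g := by
    rw [mul_coeff_zero, mul_coeff_one, nextCoeff_mul_of_noZeroDivisors, leadingCoeff_mul]
    by_cases hf : f.coeff 0 = 0
    · simp [hf]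
    by_cases hg : g.coeff 0 = 0
    · simp [hg]
    have hf' : f.leadingCoeff ≠ 0 := leadingCoeff_ne_zero.mpr fun h => hf (by simp [h])
    have hg' : g.leadingCoeff ≠ 0 := leadingCoeff_ne_zero.mpr fun h => hg (by simp [h])
    rw [if_neg hf, if_neg hg, if_neg (mul_ne_zero hf hg), ← AddChar.map_add_eq_mul]
    congr 1
    field_simp
    ring

theorem kloostermanHom_of_coeff_zero_eq_zero (ψ : AddChar k R) (a : k) {f : k[X]}
    (hf : f.coeff 0 = 0) : kloostermanHom ψ a f = 0 :=
  if_pos hf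

theorem kloostermanHom_of_monic (ψ : AddChar k R) (a : k) {f : k[X]} (hm : f.Monic)
    (hf : f.coeff 0 ≠ 0) :
    kloostermanHom ψ a f = ψ (-f.nextCoeff + a * -(f.coeff 1 / f.coeff 0)) :=
  (if_neg hf).trans (by rw [hm.leadingCoeff, div_one])

theorem coeff_one_lSeries_kloostermanHom [Fintype k] [DecidableEq k] (ψ : AddChar k R) (a : k) :
    (lSeries (kloostermanHom ψ a)).coeff 1 = kloostermanSum ψ a := by
  rw [lSeries, PowerSeries.coeff_mk, sum_monicsOfDegree_one, kloostermanSum, Finset.sum_filter]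
  refine Finset.sum_congr rfl fun x _ => ?_
  split_ifs with hx
  · rw [kloostermanHom_of_monic ψ a (monic_X_sub_C x) (by simpa using hx), nextCoeff_X_sub_C]
    simp [coeff_X, coeff_C, div_eq_mul_inv]
  · exact kloostermanHom_of_coeff_zero_eq_zero ψ a (by simpa using hx)

theorem kloostermanHom_quadratic (ψ : AddChar k R) (a : k) {b : k} (hb : b ≠ 0) (c : k) :
    kloostermanHom ψ a (X ^ 2 + C c * X + C b) = ψ (c * -(1 + a / b)) := by
  have hquad : (X ^ 2 + C c * X + C b).IsMonicOfDegree 2 := isMonicOfDegree_add_add_two c b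
  rw [kloostermanHom_of_monic ψ a hquad.monic (by simpa using hb),
    nextCoeff_of_natDegree_pos (hquad.natDegree_eq.symm ▸ two_pos), hquad.natDegree_eq]
  congr 1
  simp only [Nat.add_one_sub_one, coeff_add, coeff_X_pow, OfNat.one_ne_ofNat, ↓reduceIte,
    coeff_mul_X, coeff_C, zero_add, add_zero, OfNat.zero_ne_ofNat, mul_coeff_zero,
    coeff_X, one_ne_zero, mul_zero]
  ring

theorem coeff_two_lSeries_kloostermanHom [Fintype k] [IsDomain R] {ψ : AddChar k R} (hψ : ψ ≠ 1)
    {a : k} (ha : a ≠ 0) : (lSeries (kloostermanHom ψ a)).coeff 2 = Fintype.card k := by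
  classical
  have hsum (b : k) : ∑ c, kloostermanHom ψ a (X ^ 2 + C c * X + C b) =
      if b = -a then (Fintype.card k : R) else 0 := by
    by_cases hb : b = 0
    · rw [if_neg (by simpa [hb, eq_comm] using ha)]
      exact Finset.sum_eq_zero fun c _ =>
        kloostermanHom_of_coeff_zero_eq_zero ψ a (by simpa using hb)
    · have hiff : -(1 + a / b) = 0 ↔ b = -a := by
        rw [neg_eq_zero, one_add_div hb, div_eq_zero_iff, or_iff_left hb, add_eq_zero_iff_eq_neg]
      simp only [kloostermanHom_quadratic ψ a hb,
        AddChar.sum_mulShift _ (AddChar.IsPrimitive.of_ne_one hψ), hiff]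
      split_ifs <;> simp
  simp only [lSeries, PowerSeries.coeff_mk, sum_monicsOfDegree_two, hsum, Finset.sum_ite_eq',
    Finset.mem_univ, if_true]

theorem kloostermanHom_add_C_mul_X_pow (ψ : AddChar k R) (a t : k) {f : k[X]} {d : ℕ}
    (hf : f.IsMonicOfDegree (d + 3)) :
    kloostermanHom ψ a (f + C t * X ^ (d + 2)) = ψ (-t) * kloostermanHom ψ a f := by
  have hf' : (f + C t * X ^ (d + 2)).IsMonicOfDegree (d + 3) :=
    hf.add_right ((natDegree_C_mul_X_pow_le t _).trans_lt (by omega))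
  have h0 : (f + C t * X ^ (d + 2)).coeff 0 = f.coeff 0 := by simp
  by_cases hf0 : f.coeff 0 = 0
  · rw [kloostermanHom_of_coeff_zero_eq_zero ψ a hf0,
      kloostermanHom_of_coeff_zero_eq_zero ψ a (h0.trans hf0), mul_zero]
  have hnext : (f + C t * X ^ (d + 2)).nextCoeff = f.nextCoeff + t := by
    rw [nextCoeff_of_natDegree_pos (by rw [hf'.natDegree_eq]; omega),
      nextCoeff_of_natDegree_pos (by rw [hf.natDegree_eq]; omega), hf'.natDegree_eq,
      hf.natDegree_eq]
    simp
  have h1 : (f + C t * X ^ (d + 2)).coeff 1 = f.coeff 1 := by simp [coeff_X_pow]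
  rw [kloostermanHom_of_monic ψ a hf.monic hf0,
    kloostermanHom_of_monic ψ a hf'.monic (by rwa [h0]), hnext, h0, h1, ← AddChar.map_add_eq_mul]
  congr 1
  ring

theorem coeff_add_three_lSeries_kloostermanHom [Finite k] [IsDomain R] {ψ : AddChar k R}
    (hψ : ψ ≠ 1) (a : k) (d : ℕ) : (lSeries (kloostermanHom ψ a)).coeff (d + 3) = 0 := by
  obtain ⟨t, ht⟩ := AddChar.ne_one_iff.mp hψ
  have hshift (s : k) (f) (hf : f ∈ monicsOfDegree k (d + 3)) :
      f + C s * X ^ (d + 2) ∈ monicsOfDegree k (d + 3) :=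
    mem_monicsOfDegree.mpr ((mem_monicsOfDegree.mp hf).add_right
      ((natDegree_C_mul_X_pow_le s _).trans_lt (by omega)))
  rw [lSeries, PowerSeries.coeff_mk]
  refine eq_zero_of_mul_eq_self_left ht ?_
  rw [Finset.mul_sum]
  refine Finset.sum_bij' (fun f _ => f + C (-t) * X ^ (d + 2)) (fun f _ => f + C t * X ^ (d + 2))
    (hshift _) (hshift _) (fun f _ => by simp) (fun f _ => by simp) fun f hf => ?_
  rw [kloostermanHom_add_C_mul_X_pow ψ a _ (mem_monicsOfDegree.mp hf), neg_neg]

theorem lSeries_kloostermanHom [Fintype k] [DecidableEq k] [IsDomain R] {ψ : AddChar k R}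
    (hψ : ψ ≠ 1) {a : k} (ha : a ≠ 0) :
    lSeries (kloostermanHom ψ a) = 1 + PowerSeries.C (kloostermanSum ψ a) * PowerSeries.X +
      PowerSeries.C (Fintype.card k : R) * PowerSeries.X ^ 2 := by
  ext d
  rw [map_add, map_add, PowerSeries.coeff_C_mul, PowerSeries.coeff_C_mul, PowerSeries.coeff_one,
    PowerSeries.coeff_X, PowerSeries.coeff_X_pow]
  match d with
  | 0 => simp [coeff_zero_lSeries]
  | 1 => simp [coeff_one_lSeries_kloostermanHom]
  | 2 => simp [coeff_two_lSeries_kloostermanHom hψ ha]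
  | d + 3 => simp [coeff_add_three_lSeries_kloostermanHom hψ]

end Kloosterman

theorem sum_addChar_comp_trace {k K R : Type*} [Field k] [Field K] [Algebra k K] [Finite k]
    [Fintype K] [CommRing R] [IsDomain R] {ψ : AddChar k R} (hψ : ψ ≠ 1) :
    ∑ x : K, ψ (Algebra.trace k K x) = 0 := by
  obtain ⟨t, ht⟩ := AddChar.ne_one_iff.mp hψ
  obtain ⟨x, rfl⟩ := Algebra.trace_surjective k K t
  exact AddChar.sum_eq_zero_of_ne_one
    (ψ := ψ.compAddMonoidHom (Algebra.trace k K).toAddMonoidHom) (AddChar.ne_one_iff.mpr ⟨x, ht⟩)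

section Minpoly

variable {k K : Type*} [Field k] [Field K] [Algebra k K]

theorem minpoly_inv_dvd_reverse {x : K} (hx : x ≠ 0) :
    minpoly k x⁻¹ ∣ (minpoly k x).reverse := by
  let := invertibleOfNonzero hx
  apply minpoly.dvd
  rw [aeval_def, ← invOf_eq_inv x, eval₂_reverse_eq_zero_iff, ← aeval_def, minpoly.aeval]

theorem natDegree_minpoly_inv_le {x : K} (hi : IsIntegral k x) (hx : x ≠ 0) :
    (minpoly k x⁻¹).natDegree ≤ (minpoly k x).natDegree :=
  (natDegree_le_of_dvd (minpoly_inv_dvd_reverse hx)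
    (reverse_eq_zero.not.mpr (minpoly.ne_zero hi))).trans (reverse_natDegree_le _)

theorem natDegree_minpoly_inv {x : K} (hi : IsIntegral k x) (hx : x ≠ 0) :
    (minpoly k x⁻¹).natDegree = (minpoly k x).natDegree :=
  (natDegree_minpoly_inv_le hi hx).antisymm
    (by simpa using natDegree_minpoly_inv_le hi.inv (inv_ne_zero hx))

theorem reverse_minpoly {x : K} (hi : IsIntegral k x) (hx : x ≠ 0) :
    (minpoly k x).reverse = C ((minpoly k x).coeff 0) * minpoly k x⁻¹ := by
  have hlead : (minpoly k x).reverse.leadingCoeff = (minpoly k x).coeff 0 := by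
    rw [reverse_leadingCoeff, trailingCoeff_eq_coeff_zero (minpoly.coeff_zero_ne_zero hi hx)]
  rw [← hlead]
  exact eq_leadingCoeff_mul_of_monic_of_dvd_of_natDegree_le (minpoly.monic hi.inv)
    (minpoly_inv_dvd_reverse hx) ((reverse_natDegree_le _).trans (natDegree_minpoly_inv hi hx).ge)

theorem nextCoeff_minpoly_inv {x : K} (hi : IsIntegral k x) (hx : x ≠ 0) :
    (minpoly k x⁻¹).nextCoeff = (minpoly k x).coeff 1 / (minpoly k x).coeff 0 := by
  have hi' : IsIntegral k x⁻¹ := hi.inv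
  have hrev := reverse_minpoly hi' (inv_ne_zero hx)
  rw [inv_inv] at hrev
  have h0 : 1 = (minpoly k x⁻¹).coeff 0 * (minpoly k x).coeff 0 := by
    simpa [coeff_zero_reverse, (minpoly.monic hi').leadingCoeff] using congrArg (coeff · 0) hrev
  have h1 : (minpoly k x⁻¹).nextCoeff = (minpoly k x⁻¹).coeff 0 * (minpoly k x).coeff 1 := by
    simpa using congrArg (coeff · 1) hrev
  rw [h1, eq_div_iff (right_ne_zero_of_mul (h0 ▸ one_ne_zero))]
  linear_combination -(minpoly k x).coeff 1 * h0

theorem trace_eq_finrank_div_natDegree_nsmul [FiniteDimensional k K] (x : K) :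
    Algebra.trace k K x = (Module.finrank k K / (minpoly k x).natDegree) •
      -(minpoly k x).nextCoeff := by
  have hi : IsIntegral k x := .of_finite k x
  rw [trace_eq_finrank_mul_minpoly_nextCoeff,
    ← Module.finrank_mul_finrank k (IntermediateField.adjoin k {x}) K,
    IntermediateField.adjoin.finrank hi, Nat.mul_div_cancel_left _ (minpoly.natDegree_pos hi),
    nsmul_eq_mul]

variable {R : Type*} [CommRing R]

theorem kloostermanHom_minpoly_pow [FiniteDimensional k K] (ψ : AddChar k R) (a : k) {x : K}
    (hx : x ≠ 0) :
    kloostermanHom ψ a (minpoly k x) ^ (Module.finrank k K / (minpoly k x).natDegree) =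
      ψ (Algebra.trace k K (x + algebraMap k K a * x⁻¹)) := by
  have hi : IsIntegral k x := .of_finite k x
  rw [kloostermanHom_of_monic ψ a (minpoly.monic hi) (minpoly.coeff_zero_ne_zero hi hx),
    ← AddChar.map_nsmul_eq_pow, ← Algebra.smul_def, map_add, (Algebra.trace k K).map_smul,
    trace_eq_finrank_div_natDegree_nsmul x, trace_eq_finrank_div_natDegree_nsmul x⁻¹,
    natDegree_minpoly_inv hi hx, nextCoeff_minpoly_inv hi hx, smul_comm a, ← smul_add,
    smul_eq_mul]

theorem card_filter_minpoly_eq [Finite k] [Fintype K] [DecidableEq k[X]] {P : k[X]}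
    (hP : P ∈ monicIrreduciblesOfDegreeDvd k (Module.finrank k K)) :
    Finset.card {x : K | minpoly k x = P} = P.natDegree := by
  classical
  obtain ⟨hm, hirr, hdvd, -⟩ := mem_monicIrreduciblesOfDegreeDvd.mp hP
  have hroots : P ∣ X ^ Fintype.card K - X := by
    have := Fintype.ofFinite k
    rw [Module.card_eq_pow_finrank (K := k), ← Nat.card_eq_fintype_card]
    exact hirr.natDegree_dvd_iff_dvd_X_pow_card_pow_sub_X.mp hdvd
  have hsplits : (P.map (algebraMap k K)).Splits :=
    (FiniteField.isSplittingField_sub K k).splits.of_dvd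
      (map_ne_zero (FiniteField.X_pow_card_sub_X_ne_zero _ Fintype.one_lt_card))
      (map_dvd (algebraMap k K) hroots)
  rw [← card_rootSet_eq_natDegree (PerfectField.separable_of_irreducible hirr) hsplits,
    ← Set.toFinset_card]
  congr 1
  ext x
  rw [Finset.mem_filter, Set.mem_toFinset, mem_rootSet_of_ne hirr.ne_zero]
  refine ⟨?_, fun h => ⟨Finset.mem_univ x, (minpoly.eq_of_irreducible_of_monic hirr h hm).symm⟩⟩
  rintro ⟨-, rfl⟩
  exact minpoly.aeval _ x

variable (K) in
theorem coeff_finrank_primePowerSeries [Finite k] [Fintype K] (χ : k[X] →* R) :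
    (primePowerSeries χ).coeff (Module.finrank k K) =
      ∑ x : K, χ (minpoly k x) ^ (Module.finrank k K / (minpoly k x).natDegree) := by
  classical
  have hmem (x : K) : minpoly k x ∈ monicIrreduciblesOfDegreeDvd k (Module.finrank k K) :=
    have hi : IsIntegral k x := .of_finite k x
    mem_monicIrreduciblesOfDegreeDvd.mpr ⟨minpoly.monic hi, minpoly.irreducible hi,
      minpoly.degree_dvd hi, Module.finrank_pos.ne'⟩
  rw [primePowerSeries, PowerSeries.coeff_mk,
    ← Finset.sum_fiberwise_of_maps_to (g := minpoly k) fun x _ => hmem x]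
  refine Finset.sum_congr rfl fun P hP => ?_
  rw [Finset.sum_congr rfl fun x hx => by rw [(Finset.mem_filter.mp hx).2], Finset.sum_const,
    card_filter_minpoly_eq hP, nsmul_eq_mul]

theorem coeff_finrank_primePowerSeries_kloostermanHom [Finite k] [Fintype K] [DecidableEq K]
    (ψ : AddChar k R) (a : k) :
    (primePowerSeries (kloostermanHom ψ a)).coeff (Module.finrank k K) =
      kloostermanSum (ψ.compAddMonoidHom (Algebra.trace k K).toAddMonoidHom)
        (algebraMap k K a) := by
  rw [coeff_finrank_primePowerSeries K, kloostermanSum, Finset.sum_filter]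
  refine Finset.sum_congr rfl fun x _ => ?_
  split_ifs with hx
  · exact kloostermanHom_minpoly_pow ψ a hx
  · rw [not_not.mp hx, minpoly.zero, natDegree_X, Nat.div_one,
      kloostermanHom_of_coeff_zero_eq_zero ψ a coeff_X_zero, zero_pow Module.finrank_pos.ne']

theorem kloostermanSum_comp_trace [Fintype k] [DecidableEq k] [Fintype K] [DecidableEq K]
    [IsDomain R] {ψ : AddChar k R} (hψ : ψ ≠ 1) {a : k} (ha : a ≠ 0) {α β : R}
    (hadd : α + β = -kloostermanSum ψ a) (hmul : α * β = Fintype.card k) :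
    kloostermanSum (ψ.compAddMonoidHom (Algebra.trace k K).toAddMonoidHom) (algebraMap k K a) =
      -(α ^ Module.finrank k K + β ^ Module.finrank k K) := by
  have hL : lSeries (kloostermanHom ψ a) =
      (1 - PowerSeries.C α * PowerSeries.X) * (1 - PowerSeries.C β * PowerSeries.X) := by
    rw [lSeries_kloostermanHom hψ ha, ← hmul, ← neg_eq_iff_eq_neg.mpr hadd, map_neg, map_add,
      map_mul]
    ring
  rw [← coeff_finrank_primePowerSeries_kloostermanHom,
    coeff_primePowerSeries_of_lSeries_eq hL Module.finrank_pos.ne']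

end Minpoly

theorem one_add_pow_add_one_sub_pow {A : Type*} [CommRing A] (s : A) (m : ℕ) :
    (1 + s) ^ m + (1 - s) ^ m =
      2 * ∑ r ∈ Finset.range (m / 2 + 1), (m.choose (2 * r) : A) * (s ^ 2) ^ r := by
  have hterm (n : ℕ) : s ^ n * m.choose n + (-s) ^ n * m.choose n =
      if Even n then 2 * (m.choose n * s ^ n) else 0 := by
    split_ifs with hn
    · rw [hn.neg_pow]; ring
    · rw [(Nat.not_even_iff_odd.mp hn).neg_pow]; ring
  rw [sub_eq_add_neg, add_comm 1 s, add_comm 1 (-s), add_pow, add_pow, ← Finset.sum_add_distrib,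
    Finset.mul_sum]
  simp only [one_pow, mul_one, hterm, ← Finset.sum_filter]
  refine (Finset.sum_bij (fun r _ => 2 * r) (fun r hr => ?_) (fun _ _ _ _ h => by omega)
    (fun n hn => ?_) fun r _ => by rw [pow_mul]).symm
  · rw [Finset.mem_range] at hr
    exact Finset.mem_filter.mpr ⟨Finset.mem_range.mpr (by omega), even_two_mul r⟩
  · obtain ⟨hn, r, rfl⟩ := Finset.mem_filter.mp hn
    rw [Finset.mem_range] at hn
    exact ⟨r, Finset.mem_range.mpr (by omega), two_mul r⟩

section Binary

variable (R : Type*) [CommRing R]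

/-- The additive character `x ↦ (-1) ^ x` of the field with two elements, nontrivial if `-1 ≠ 1` in
`R`. -/
def signChar : AddChar (ZMod 2) R :=
  AddChar.zmodChar 2 (neg_one_sq (R := R))

theorem signChar_one : signChar R 1 = -1 := by
  rw [← Nat.cast_one, signChar, AddChar.zmodChar_apply', pow_one]

theorem kloostermanSum_signChar_one : kloostermanSum (signChar R) 1 = 1 := by
  have h : (Finset.univ.filter fun x : ZMod 2 => x ≠ 0) = {1} := by decide
  have h0 : (1 + 1 * 1⁻¹ : ZMod 2) = 0 := by rw [inv_one]; decide
  rw [kloostermanSum, h, Finset.sum_singleton, h0, AddChar.map_zero_eq_one]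

variable {R}

theorem signChar_ne_one [Nontrivial R] (hR : ringChar R ≠ 2) : signChar R ≠ 1 :=
  AddChar.ne_one_iff.mpr ⟨1, by
    rw [signChar_one]; exact Ring.neg_one_ne_one_of_char_ne_two hR⟩

theorem one_sub_signChar_mul_one_sub_signChar (u v : ZMod 2) :
    (1 - signChar R u) * (1 - signChar R v) = if u = 1 ∧ v = 1 then 4 else 0 := by
  have h (u : ZMod 2) : 1 - signChar R u = if u = 1 then 2 else 0 := by
    split_ifs with hu
    · rw [hu, signChar_one]; ring
    · rw [(by decide : ∀ u : ZMod 2, u ≠ 1 → u = 0) u hu, AddChar.map_zero_eq_one, sub_self]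
  rw [h, h, ite_and]
  split_ifs <;> ring

theorem four_mul_card_trace_eq_one_and_trace_inv_eq_one {F : Type*} [Field F] [Fintype F]
    [DecidableEq F] [Algebra (ZMod 2) F] [IsDomain R] (hR : ringChar R ≠ 2) :
    (4 : R) * Nat.card {x : F | x ≠ 0 ∧ Algebra.trace (ZMod 2) F x = 1 ∧
      Algebra.trace (ZMod 2) F x⁻¹ = 1} = Fintype.card F + 1 + kloostermanSum
        ((signChar R).compAddMonoidHom (Algebra.trace (ZMod 2) F).toAddMonoidHom) 1 := by
  set tr := Algebra.trace (ZMod 2) F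
  have hsum : ∑ x : F, signChar R (tr x) = 0 := sum_addChar_comp_trace (signChar_ne_one hR)
  have hsum_inv : ∑ x : F, signChar R (tr x⁻¹) = 0 :=
    (Equiv.sum_comp (Equiv.inv F) fun x => signChar R (tr x)).trans hsum
  have hset : {x : F | x ≠ 0 ∧ tr x = 1 ∧ tr x⁻¹ = 1} =
      ↑(Finset.univ.filter fun x : F => tr x = 1 ∧ tr x⁻¹ = 1) := by
    ext x
    rw [Finset.coe_filter_univ]
    refine and_iff_right_of_imp ?_
    rintro ⟨hx, -⟩ rfl
    exact zero_ne_one ((map_zero tr).symm.trans hx)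
  rw [add_assoc, one_add_kloostermanSum, hset, Nat.card_eq_card_toFinset, Finset.toFinset_coe]
  calc (4 : R) * Finset.card {x : F | tr x = 1 ∧ tr x⁻¹ = 1}
      = ∑ x : F, (1 - signChar R (tr x)) * (1 - signChar R (tr x⁻¹)) := by
        simp only [one_sub_signChar_mul_one_sub_signChar, ← Finset.sum_filter, Finset.sum_const,
          nsmul_eq_mul, mul_comm]
    _ = ∑ x : F, (1 - signChar R (tr x) - signChar R (tr x⁻¹) + signChar R (tr (x + x⁻¹))) :=
        Finset.sum_congr rfl fun x _ => by rw [map_add, AddChar.map_add_eq_mul]; ring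
    _ = Fintype.card F + ∑ x : F, signChar R (tr (x + x⁻¹)) := by
        simp only [Finset.sum_add_distrib, Finset.sum_sub_distrib, hsum, hsum_inv]
        simp
    _ = _ := by simp only [one_mul]; rfl

theorem kloostermanSum_signChar_comp_trace (F : Type*) [Field F] [Fintype F] [DecidableEq F]
    [Algebra (ZMod 2) F] {m : ℕ} (hm : Module.finrank (ZMod 2) F = m) :
    kloostermanSum ((signChar ℂ).compAddMonoidHom (Algebra.trace (ZMod 2) F).toAddMonoidHom) 1 =
      2 / 2 ^ m *
        ∑ r ∈ Finset.range (m / 2 + 1), (-1) ^ (m + r + 1) * (m.choose (2 * r) : ℂ) * 7 ^ r := by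
  obtain ⟨s, hs⟩ : ∃ s : ℂ, s ^ 2 = -7 := IsAlgClosed.exists_pow_nat_eq _ two_pos
  have hroots := kloostermanSum_comp_trace (K := F) (signChar_ne_one (R := ℂ) (by simp))
    one_ne_zero (α := -(1 + s) / 2) (β := -(1 - s) / 2)
    (by rw [kloostermanSum_signChar_one]; ring)
    (by rw [ZMod.card]; linear_combination -hs / 4)
  have hsigns :
      ∑ r ∈ Finset.range (m / 2 + 1), (-1) ^ (m + r + 1) * (m.choose (2 * r) : ℂ) * 7 ^ r =
        -(-1) ^ m * ∑ r ∈ Finset.range (m / 2 + 1), (m.choose (2 * r) : ℂ) * (-7) ^ r := by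
    rw [Finset.mul_sum]
    exact Finset.sum_congr rfl fun r _ => by rw [neg_pow 7 r]; ring
  rw [← map_one (algebraMap (ZMod 2) F), hroots, hm, div_pow, div_pow, ← add_div, neg_pow,
    neg_pow (1 - s), ← mul_add, one_add_pow_add_one_sub_pow, hs, hsigns]
  ring

end Binary

theorem binary_T11 (m : ℕ) (hm : 2 ≤ m) (F : Type*) [Field F] [Fintype F]
    [Algebra (ZMod 2) F] (hq : Fintype.card F = 2 ^ m) :
    (Nat.card {x : F | x ≠ 0 ∧ Algebra.trace (ZMod 2) F x = 1 ∧
        Algebra.trace (ZMod 2) F x⁻¹ = 1} : ℝ) =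
      ((2 : ℝ) ^ m + 1) / 4 + (1 / 2 ^ (m + 1)) *
        ∑ r ∈ Finset.range (m / 2 + 1), (-1 : ℝ) ^ (m + r + 1) * (m.choose (2 * r)) * 7 ^ r := by
  classical
  have hfinrank : Module.finrank (ZMod 2) F = m := by
    have h := Module.card_eq_pow_finrank (K := ZMod 2) (V := F)
    rw [hq, ZMod.card] at h
    exact (Nat.pow_right_injective le_rfl h).symm
  have hcard := four_mul_card_trace_eq_one_and_trace_inv_eq_one (R := ℂ) (F := F) (by simp)
  rw [kloostermanSum_signChar_comp_trace F hfinrank, hq] at hcard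
  apply Complex.ofReal_injective
  push_cast at hcard ⊢
  linear_combination hcard / 4
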